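/- Let α₀ : [0,1] → 𝔤 be a geodesic and β₀ a Jacobi field along α₀. Then there exist smooth maps α, β : ℝ × [0,1] → 𝔤 such that α(0,·) = α₀, β(0,·) = β₀, for every ε the curve t ↦ α(ε,t) is a geodesic, and Δ(α,β) = 0; i.e. every Jacobi field arises as the transverse variation of a variation through geodesics. -/

import Mathlib

open scoped InnerProductSpace

/-- Partial derivative in the second variable `t` of a map `ℝ² → G`. -/
noncomputable def partialT {G : Type*} [NormedAddCommGroup G] [NormedSpace ℝ G]
    (f : ℝ × ℝ → G) (p : ℝ × ℝ) : G :=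
  fderiv ℝ f p (0, 1)

/-- Partial derivative in the first variable `ε` of a map `ℝ² → G`. -/
noncomputable def partialE {G : Type*} [NormedAddCommGroup G] [NormedSpace ℝ G]
    (f : ℝ × ℝ → G) (p : ℝ × ℝ) : G :=
  fderiv ℝ f p (1, 0)

/-- The covariant derivative `∇β = β' + D_α β` of a curve `β` along a curve `α`. -/
noncomputable def covDeriv {G : Type*} [NormedAddCommGroup G] [NormedSpace ℝ G]
    (D : G →ₗ[ℝ] G →ₗ[ℝ] G) (α β : ℝ → G) : ℝ → G :=
  fun t => deriv β t + D (α t) (β t)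

/-- The curvature `R(u,v)w = D_u(D_v w) - D_v(D_u w) - D_{[u,v]}w`. -/
def curv {G : Type*} [AddCommGroup G] [Module ℝ G]
    (lie D : G →ₗ[ℝ] G →ₗ[ℝ] G) (u v w : G) : G :=
  D u (D v w) - D v (D u w) - D (lie u v) w

/-!
At a point of the variation sought, the triple `(α, γ, β)` with `γ = ∂α/∂ε` satisfies an autonomous
system in `t`: the geodesic equation for `α`, its linearisation for `γ`, and `∂β/∂t = γ - [α, β]`.
Torsion-freeness turns the Jacobi equation for `β₀` into the linearised geodesic equation for
`γ₀ = β₀' + [α₀, β₀]`, so `(α₀, γ₀, β₀)` is a solution. The variation is the solution starting at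
`(α₀(0) + ε γ₀(0), γ₀(0), β₀(0))`: uniqueness for the linearised equation gives `γ = ∂α/∂ε`.

The system is complete because `⟨α, D_α α⟩ = 0` makes `‖α‖` constant, and it is linear in `(γ, β)`.
Its flow is smooth by the implicit function theorem in `C([0, 1], 𝔤³)`, applied to the integral
equation: the partial derivative is the identity minus a Volterra operator, hence invertible.
-/

open Set Filter Topology Metric
open scoped ContDiff Manifold NNReal

section
variable {E : Type*} [NormedAddCommGroup E] [NormedSpace ℝ E] {f : E → E}

theorem eqOn_Icc_of_isIntegralCurveOn (hf : LocallyLipschitz f) {u v : ℝ → E} {a b : ℝ}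
    (hu : IsIntegralCurveOn u (fun _ ↦ f) (Icc a b))
    (hv : IsIntegralCurveOn v (fun _ ↦ f) (Icc a b)) (huv : u a = v a) :
    EqOn u v (Icc a b) := by
  obtain ⟨K, hK⟩ := (hf.locallyLipschitzOn
    (s := u '' Icc a b ∪ v '' Icc a b)).exists_lipschitzOnWith_of_compact
    ((isCompact_Icc.image_of_continuousOn hu.continuousOn).union
      (isCompact_Icc.image_of_continuousOn hv.continuousOn))
  have right_deriv {w : ℝ → E} (hw : IsIntegralCurveOn w (fun _ ↦ f) (Icc a b)) :
      ∀ t ∈ Ico a b, HasDerivWithinAt w (f (w t)) (Ici t) t := fun t ht ↦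
    (hw t (Ico_subset_Icc_self ht)).mono_of_mem_nhdsWithin (Icc_mem_nhdsGE_of_mem ht)
  exact ODE_solution_unique_of_mem_Icc_right (fun _ _ ↦ hK) hu.continuousOn (right_deriv hu)
    (fun t ht ↦ .inl ⟨t, Ico_subset_Icc_self ht, rfl⟩) hv.continuousOn (right_deriv hv)
    (fun t ht ↦ .inr ⟨t, Ico_subset_Icc_self ht, rfl⟩) huv

theorem exists_isIntegralCurve_of_uniform_time [CompleteSpace E] (hf : ContDiff ℝ 1 f)
    {ε : ℝ} (hε : 0 < ε)
    (h : ∀ x, ∃ γ : ℝ → E, γ 0 = x ∧ IsIntegralCurveOn γ (fun _ ↦ f) (Ioo (-ε) ε)) (x : E) :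
    ∃ γ : ℝ → E, γ 0 = x ∧ IsIntegralCurve γ (fun _ ↦ f) := by
  have hX : CMDiff 1 (fun y ↦ (⟨y, f y⟩ : TangentBundle 𝓘(ℝ, E) E)) :=
    contMDiff_vectorSpace_iff_contDiff.mpr hf
  obtain ⟨γ, hγ₀, hγ⟩ := exists_isMIntegralCurve_of_isMIntegralCurveOn (I := 𝓘(ℝ, E)) hX hε
    (fun y ↦ (h y).imp fun γ hγ ↦
      ⟨hγ.1, fun t ht ↦ (hγ.2 t ht).hasFDerivWithinAt.hasMFDerivWithinAt⟩) x
  exact ⟨γ, hγ₀, fun t ↦ hasDerivAt_iff_hasFDerivAt.mpr (hasMFDerivAt_iff_hasFDerivAt.mp (hγ t))⟩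

theorem exists_isIntegralCurve_of_norm_le [FiniteDimensional ℝ E] (hf : ContDiff ℝ 1 f)
    {C : ℝ≥0} (hC : ∀ x, ‖f x‖ ≤ C * ‖x‖) (x₀ : E) :
    ∃ γ : ℝ → E, γ 0 = x₀ ∧ IsIntegralCurve γ (fun _ ↦ f) := by
  have : CompleteSpace E := FiniteDimensional.complete ℝ E
  have : ProperSpace E := FiniteDimensional.proper_real E
  let τ : ℝ := (2 * (C + 1))⁻¹
  have hτ : 0 < τ := by positivity
  refine exists_isIntegralCurve_of_uniform_time hf hτ (fun x ↦ ?_) x₀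
  let r : ℝ≥0 := 1 + ‖x‖₊
  obtain ⟨K, hK⟩ := hf.contDiffOn.exists_lipschitzOnWith one_ne_zero (convex_closedBall x r)
    (isCompact_closedBall x r)
  have norm_le : ∀ y ∈ closedBall x r, ‖f y‖ ≤ (2 * (C + 1) * r : ℝ≥0) := fun y hy ↦
    calc ‖f y‖ ≤ C * ‖y‖ := hC y
      _ ≤ (C + 1) * (‖x‖ + r) := by
        gcongr
        exacts [by simp, norm_le_norm_add_const_of_dist_le hy]
      _ ≤ (2 * (C + 1) * r : ℝ≥0) := by
        simp only [r, NNReal.coe_mul, NNReal.coe_add, NNReal.coe_ofNat, NNReal.coe_one, coe_nnnorm]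
        nlinarith [C.coe_nonneg]
  have picard : IsPicardLindelof (fun _ ↦ f) (tmin := -τ) (tmax := τ)
      ⟨0, by constructor <;> linarith⟩ x r 0 (2 * (C + 1) * r) K := by
    refine .of_time_independent norm_le hK (le_of_eq ?_)
    simp only [sub_zero, zero_sub, neg_neg, max_self, τ]
    push_cast
    field_simp
    simp
  obtain ⟨γ, hγ₀, hγ⟩ := picard.exists_eq_forall_mem_Icc_hasDerivWithinAt₀
  exact ⟨γ, hγ₀, IsIntegralCurveOn.mono hγ Ioo_subset_Icc_self⟩

theorem exists_isIntegralCurve_of_inner_eq_zero [FiniteDimensional ℝ E]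
    {G : Type*} [NormedAddCommGroup G] [InnerProductSpace ℝ G] (π : E →L[ℝ] G)
    (hf : ContDiff ℝ 1 f) (hgrowth : ∀ r : ℝ, ∃ C : ℝ≥0, ∀ x, ‖π x‖ ≤ r → ‖f x‖ ≤ C * ‖x‖)
    (hinner : ∀ x, ⟪π x, π (f x)⟫_ℝ = 0) (x₀ : E) :
    ∃ γ : ℝ → E, γ 0 = x₀ ∧ IsIntegralCurve γ (fun _ ↦ f) := by
  -- `‖π γ‖` is conserved, so cutting `f` off where `‖π x‖` is large leaves the curve unchanged.
  let χ : ContDiffBump (0 : G) := ⟨‖π x₀‖ + 1, ‖π x₀‖ + 2, by positivity, by linarith⟩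
  obtain ⟨C, hC⟩ := hgrowth χ.rOut
  have norm_le (x : E) : ‖χ (π x) • f x‖ ≤ C * ‖x‖ := by
    rw [norm_smul, Real.norm_of_nonneg χ.nonneg]
    rcases le_total ‖π x‖ χ.rOut with hx | hx
    · exact (mul_le_of_le_one_left (norm_nonneg _) χ.le_one).trans (hC x hx)
    · rw [χ.zero_of_le_dist (by simpa using hx), zero_mul]
      positivity
  obtain ⟨γ, hγ₀, hγ⟩ := exists_isIntegralCurve_of_norm_le
    (f := fun x ↦ χ (π x) • f x) ((χ.contDiff.comp π.contDiff).smul hf) norm_le x₀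
  have conserved (t : ℝ) : ‖π (γ t)‖ ^ 2 = ‖π x₀‖ ^ 2 := by
    have h (s : ℝ) : HasDerivAt (fun s ↦ ‖π (γ s)‖ ^ 2) 0 s := by
      convert! (π.hasFDerivAt.comp_hasDerivAt s (hγ s)).norm_sq using 1
      simp [inner_smul_right, hinner]
    rw [is_const_of_deriv_eq_zero (fun s ↦ (h s).differentiableAt) (fun s ↦ (h s).deriv) t 0, hγ₀]
  refine ⟨γ, hγ₀, fun t ↦ ?_⟩
  have hχ : χ (π (γ t)) = 1 := χ.one_of_mem_closedBall <| by
    rw [mem_closedBall_zero_iff,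
      (pow_left_inj₀ (norm_nonneg _) (norm_nonneg _) two_ne_zero).mp (conserved t)]
    exact (lt_add_one _).le
  simpa only [hχ, one_smul] using hγ t

end

section
universe u
variable {K : Type*} [TopologicalSpace K] [CompactSpace K]
  {E F : Type*} [NormedAddCommGroup E] [NormedSpace ℝ E] [NormedAddCommGroup F] [NormedSpace ℝ F]

/-- The pointwise action `(A, u) ↦ (k ↦ A k (u k))` of operator-valued on vector-valued continuous
maps, through which derivatives of superposition operators are expressed. -/
noncomputable def pointwiseApply : C(K, E →L[ℝ] F) →L[ℝ] C(K, E) →L[ℝ] C(K, F) :=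
  LinearMap.mkContinuous₂
    (LinearMap.mk₂ ℝ
      (fun (A : C(K, E →L[ℝ] F)) (u : C(K, E)) ↦
        (⟨fun k ↦ A k (u k), A.continuous.clm_apply u.continuous⟩ : C(K, F)))
      (fun _ _ _ ↦ by ext; simp) (fun _ _ _ ↦ by ext; simp)
      (fun _ _ _ ↦ by ext; simp) (fun _ _ _ ↦ by ext; simp))
    1 fun A u ↦ (ContinuousMap.norm_le _ (by positivity)).mpr fun k ↦ by
      rw [one_mul]
      exact (A k).le_of_opNorm_le_of_le (A.norm_coe_le_norm k) (u.norm_coe_le_norm k)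

@[simp]
theorem pointwiseApply_apply (A : C(K, E →L[ℝ] F)) (u : C(K, E)) (k : K) :
    pointwiseApply A u k = A k (u k) := rfl

theorem hasFDerivAt_continuousMap_comp {f : C(E, F)} {f' : C(E, E →L[ℝ] F)}
    (hf : ∀ x, HasFDerivAt f (f' x) x) (u : C(K, E)) :
    HasFDerivAt (fun w : C(K, E) ↦ f.comp w) (pointwiseApply (f'.comp u)) u := by
  refine hasFDerivAt_iff_isLittleO_nhds_zero.mpr (Asymptotics.isLittleO_iff.mpr fun ε hε ↦ ?_)
  obtain ⟨δ, hδ, near⟩ : ∃ δ > 0, ∀ ⦃w : C(K, E)⦄, dist w u < δ →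
      dist (f'.comp w) (f'.comp u) < ε :=
    Metric.continuousAt_iff.mp (ContinuousMap.continuous_postcomp f').continuousAt ε hε
  have fderiv_near (k : K) : ∀ y ∈ ball (u k) δ, ‖f' y - f' (u k)‖ ≤ ε := fun y hy ↦ by
    have hw : dist (u + .const K (y - u k)) u < δ := by
      rw [dist_eq_norm, add_sub_cancel_left]
      refine (ContinuousMap.norm_lt_iff _ hδ).mpr fun _ ↦ mem_ball_iff_norm.mp hy
    simpa [dist_eq_norm] using ((ContinuousMap.dist_apply_le_dist k).trans_lt (near hw)).le
  filter_upwards [ball_mem_nhds 0 hδ] with h hh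
  refine (ContinuousMap.norm_le _ (by positivity)).mpr fun k ↦ ?_
  have hk : u k + h k ∈ ball (u k) δ := by
    simpa using (h.norm_coe_le_norm k).trans_lt (mem_ball_zero_iff.mp hh)
  calc ‖f (u k + h k) - f (u k) - f' (u k) (h k)‖ ≤ ε * ‖h k‖ := by
        simpa using (convex_ball (u k) δ).norm_image_sub_le_of_norm_hasFDerivWithin_le'
          (fun y _ ↦ (hf y).hasFDerivWithinAt) (fderiv_near k) (mem_ball_self hδ) hk
    _ ≤ ε * ‖h‖ := by gcongr; exact h.norm_coe_le_norm k

theorem contDiff_continuousMap_comp {E F : Type u} [NormedAddCommGroup E] [NormedSpace ℝ E]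
    [NormedAddCommGroup F] [NormedSpace ℝ F] {n : ℕ∞} {f : C(E, F)} (hf : ContDiff ℝ n f) :
    ContDiff ℝ n fun u : C(K, E) ↦ f.comp u := by
  suffices h : ∀ m : ℕ, ∀ {F : Type u} [NormedAddCommGroup F] [NormedSpace ℝ F] {f : C(E, F)},
      ContDiff ℝ m f → ContDiff ℝ m fun u : C(K, E) ↦ f.comp u from
    contDiff_iff_forall_nat_le.mpr fun m hm ↦ h m (hf.of_le (mod_cast hm))
  intro m
  induction m with
  | zero => exact fun {F} _ _ f _ ↦ contDiff_zero.mpr (ContinuousMap.continuous_postcomp f)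
  | succ m ih =>
    intro F _ _ f hf
    rw [Nat.cast_add, Nat.cast_one] at hf ⊢
    obtain ⟨hdiff, -, hderiv⟩ := contDiff_succ_iff_fderiv.mp hf
    let f' : C(E, E →L[ℝ] F) := ⟨fderiv ℝ f, hderiv.continuous⟩
    have hf' : ContDiff ℝ m fun u : C(K, E) ↦ f'.comp u := ih hderiv
    exact contDiff_succ_iff_hasFDerivAt.mpr ⟨fun u ↦ pointwiseApply (f'.comp u),
      by fun_prop,
      hasFDerivAt_continuousMap_comp (f' := f') fun x ↦ (hdiff x).hasFDerivAt⟩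

end

section
variable {E : Type*} [NormedAddCommGroup E] [NormedSpace ℝ E]

theorem norm_integral_IccExtend_le (u : C(unitInterval, E)) (s : unitInterval) {C : ℝ} {n : ℕ}
    (h : ∀ r, ‖u r‖ ≤ C * (r : ℝ) ^ n) :
    ‖∫ r in (0 : ℝ)..s, IccExtend zero_le_one u r‖ ≤ C * (s : ℝ) ^ (n + 1) / (n + 1) := by
  calc ‖∫ r in (0 : ℝ)..s, IccExtend zero_le_one u r‖ ≤ ∫ r in (0 : ℝ)..s, C * r ^ n := by
        refine intervalIntegral.norm_integral_le_of_norm_le s.2.1 (.of_forall fun r hr ↦ ?_)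
          (Continuous.intervalIntegrable (by fun_prop) _ _)
        rw [IccExtend_of_mem _ _ ⟨hr.1.le, hr.2.trans s.2.2⟩]
        exact h _
    _ = C * (s : ℝ) ^ (n + 1) / (n + 1) := by
        rw [intervalIntegral.integral_const_mul, integral_pow]
        simp [mul_div_assoc]

/-- The Volterra operator `(V u)(s) = ∫₀ˢ u` on `C([0, 1], E)`, which turns initial value problems
into fixed point equations. -/
noncomputable def volterra : C(unitInterval, E) →L[ℝ] C(unitInterval, E) :=
  LinearMap.mkContinuous
    { toFun := fun u ↦ ⟨fun s ↦ ∫ r in (0 : ℝ)..s, IccExtend zero_le_one u r,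
        (intervalIntegral.continuous_primitive (fun a b ↦
          (u.continuous.Icc_extend' (h := zero_le_one)).intervalIntegrable a b) 0).comp
          continuous_subtype_val⟩
      map_add' := fun u v ↦ by
        ext s
        exact intervalIntegral.integral_add
          ((u.continuous.Icc_extend' (h := zero_le_one)).intervalIntegrable _ _)
          ((v.continuous.Icc_extend' (h := zero_le_one)).intervalIntegrable _ _)
      map_smul' := fun c u ↦ by
        ext s
        exact intervalIntegral.integral_smul c _ }
    1 fun u ↦ (ContinuousMap.norm_le _ (by positivity)).mpr fun s ↦ by
      refine (norm_integral_IccExtend_le u s (C := ‖u‖) (n := 0)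
        (by simpa using u.norm_coe_le_norm)).trans ?_
      simpa [mul_comm] using mul_le_mul_of_nonneg_left s.2.2 (norm_nonneg u)

theorem volterra_apply (u : C(unitInterval, E)) (s : unitInterval) :
    volterra u s = ∫ r in (0 : ℝ)..s, IccExtend zero_le_one u r := rfl

theorem eq_const_add_volterra_comp_iff [CompleteSpace E] {f : C(E, E)} {x : E}
    {u : C(unitInterval, E)} :
    u = .const _ x + volterra (f.comp u) ↔
      u 0 = x ∧ IsIntegralCurveOn (IccExtend zero_le_one u) (fun _ ↦ f) (Icc 0 1) := by
  have hu : Continuous (IccExtend zero_le_one u) := u.continuous.Icc_extend'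
  have volterra_comp (s : unitInterval) :
      volterra (f.comp u) s = ∫ r in (0 : ℝ)..s, f (IccExtend zero_le_one u r) := rfl
  constructor
  · intro h
    have eval (s : unitInterval) : u s = x + ∫ r in (0 : ℝ)..s, f (IccExtend zero_le_one u r) :=
      DFunLike.congr_fun h s
    refine ⟨by simpa using eval 0, fun s hs ↦ ?_⟩
    have hderiv := ((f.continuous.comp hu).integral_hasStrictDerivAt 0 s).hasDerivAt.const_add x
    refine hderiv.hasDerivWithinAt.congr_of_mem (fun r hr ↦ ?_) hs
    rw [IccExtend_of_mem _ _ hr, eval]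
    rfl
  · rintro ⟨rfl, h⟩
    ext s
    have hderiv (r : ℝ) (hr : r ∈ Ioo (0 : ℝ) s) : HasDerivAt (IccExtend zero_le_one u)
        (f (IccExtend zero_le_one u r)) r :=
      (h r ⟨hr.1.le, hr.2.le.trans s.2.2⟩).hasDerivAt
        (Icc_mem_nhds hr.1 (hr.2.trans_le s.2.2))
    simp [volterra_comp, intervalIntegral.integral_eq_sub_of_hasDerivAt_of_le s.2.1
      hu.continuousOn hderiv ((f.continuous.comp hu).intervalIntegrable _ _)]

theorem norm_volterra_pointwiseApply_pow_le (A : C(unitInterval, E →L[ℝ] E))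
    (u : C(unitInterval, E)) (n : ℕ) (s : unitInterval) :
    ‖((volterra ∘L pointwiseApply A) ^ n) u s‖ ≤ ‖A‖ ^ n * ‖u‖ / n.factorial * (s : ℝ) ^ n := by
  induction n generalizing s with
  | zero => simpa using u.norm_coe_le_norm s
  | succ n ih =>
    rw [pow_succ', mul_apply_eq_comp, ContinuousLinearMap.comp_apply, volterra_apply]
    refine (norm_integral_IccExtend_le _ s (C := ‖A‖ * (‖A‖ ^ n * ‖u‖ / n.factorial)) (n := n)
      fun r ↦ ?_).trans_eq ?_
    · rw [mul_assoc, pointwiseApply_apply]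
      exact (A r).le_of_opNorm_le_of_le (A.norm_coe_le_norm r) (ih r)
    · rw [Nat.factorial_succ]
      push_cast
      field_simp
      ring

theorem isUnit_one_sub_of_norm_pow_lt_one {R : Type*} [NormedRing R] [HasSummableGeomSeries R]
    {x : R} {n : ℕ} (h : ‖x ^ n‖ < 1) : IsUnit (1 - x) := by
  have hcomm : Commute (1 - x) (∑ i ∈ Finset.range n, x ^ i) :=
    .sum_right _ _ _ fun i _ ↦ (Commute.one_left _).sub_left (Commute.self_pow x i)
  exact (hcomm.isUnit_mul_iff.mp (mul_neg_geom_sum x n ▸ isUnit_one_sub_of_norm_lt_one h)).1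

theorem isUnit_one_sub_volterra_pointwiseApply [CompleteSpace E]
    (A : C(unitInterval, E →L[ℝ] E)) : IsUnit (1 - volterra ∘L pointwiseApply A) := by
  obtain ⟨n, hn⟩ := ((FloorSemiring.tendsto_pow_div_factorial_atTop ‖A‖).eventually_lt_const
    one_pos).exists
  have norm_pow_lt : ‖(volterra ∘L pointwiseApply A) ^ n‖ < 1 := by
    refine (ContinuousLinearMap.opNorm_le_bound _ (by positivity) fun u ↦ ?_).trans_lt hn
    refine (ContinuousMap.norm_le _ (by positivity)).mpr fun s ↦ ?_
    refine (norm_volterra_pointwiseApply_pow_le A u n s).trans ?_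
    rw [mul_div_right_comm]
    exact mul_le_of_le_one_right (by positivity) (pow_le_one₀ s.2.1 s.2.2)
  exact isUnit_one_sub_of_norm_pow_lt_one
    (R := C(unitInterval, E) →L[ℝ] C(unitInterval, E)) norm_pow_lt

/-- The residual `u - (x + τ ∫₀ f ∘ u)` of `u` as a solution on `[0, 1]` of `u' = τ f(u)`,
`u(0) = x`. Time is scaled by the parameter `τ` so that all solutions live in the one space
`C([0, 1], E)`. -/
noncomputable def ivpResidual (f : C(E, E)) (p : (ℝ × E) × C(unitInterval, E)) :
    C(unitInterval, E) :=
  p.2 - (ContinuousLinearMap.const ℝ unitInterval p.1.2 + p.1.1 • volterra (f.comp p.2))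

theorem ivpResidual_eq_zero_iff [CompleteSpace E] {f : C(E, E)} {p : ℝ × E}
    {u : C(unitInterval, E)} :
    ivpResidual f (p, u) = 0 ↔ u 0 = p.2 ∧
      IsIntegralCurveOn (IccExtend zero_le_one u) (fun _ ↦ p.1 • f) (Icc 0 1) := by
  rw [ivpResidual, sub_eq_zero, ← map_smul]
  exact eq_const_add_volterra_comp_iff (f := p.1 • f)

theorem contDiff_ivpResidual {n : ℕ∞} {f : C(E, E)} (hf : ContDiff ℝ n f) :
    ContDiff ℝ n (ivpResidual f) := by
  have hcomp : ContDiff ℝ n fun u : C(unitInterval, E) ↦ f.comp u :=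
    contDiff_continuousMap_comp hf
  unfold ivpResidual
  fun_prop

theorem isInvertible_fderiv_ivpResidual [CompleteSpace E] {f : C(E, E)} (hf : ContDiff ℝ 1 f)
    (p : ℝ × E) (u : C(unitInterval, E)) :
    (fderiv ℝ (ivpResidual f) (p, u) ∘L .inr ℝ (ℝ × E) C(unitInterval, E)).IsInvertible := by
  let f' : C(E, E →L[ℝ] E) := ⟨fderiv ℝ f, hf.continuous_fderiv one_ne_zero⟩
  have hcomp : HasFDerivAt (fun w : C(unitInterval, E) ↦ f.comp w) (pointwiseApply (f'.comp u)) u :=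
    hasFDerivAt_continuousMap_comp (fun x ↦ (hf.differentiable one_ne_zero x).hasFDerivAt) u
  have hvolterra : HasFDerivAt (fun w : C(unitInterval, E) ↦ volterra (f.comp w))
      (volterra ∘L pointwiseApply (f'.comp u)) u :=
    (volterra (E := E)).hasFDerivAt.comp u hcomp
  have hpartial : HasFDerivAt (fun w ↦ ivpResidual f (p, w))
      (.id ℝ _ - p.1 • (volterra ∘L pointwiseApply (f'.comp u))) u :=
    (hasFDerivAt_id u).sub
      ((hvolterra.const_smul p.1).const_add (ContinuousLinearMap.const ℝ _ p.2))
  have htotal := ((contDiff_ivpResidual hf).differentiable one_ne_zero (p, u)).hasFDerivAt.comp u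
    (hasFDerivAt_prodMk_right p u)
  obtain ⟨v, hv⟩ := isUnit_one_sub_volterra_pointwiseApply (p.1 • f'.comp u)
  rw [htotal.unique hpartial]
  refine ⟨.ofUnit v, hv.trans ?_⟩
  rw [map_smul, ContinuousLinearMap.comp_smul]
  rfl

theorem contDiff_of_forall_isIntegralCurve [CompleteSpace E] {n : ℕ∞} (hn : n ≠ 0) {f : E → E}
    (hf : ContDiff ℝ n f) {φ : ℝ × E → E} (hφ₀ : ∀ x, φ (0, x) = x)
    (hφ : ∀ x, IsIntegralCurve (fun t ↦ φ (t, x)) fun _ ↦ f) : ContDiff ℝ n φ := by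
  have hf₁ : ContDiff ℝ 1 f := hf.of_le (mod_cast Order.one_le_iff_ne_zero.mpr hn)
  let fc : C(E, E) := ⟨f, hf.continuous⟩
  have hcurve (p : ℝ × E) : IsIntegralCurve (fun s ↦ φ (s * p.1, p.2)) fun _ ↦ p.1 • f :=
    (hφ p.2).comp_mul p.1
  refine contDiff_iff_contDiffAt.mpr fun p ↦ ?_
  let u : C(unitInterval, E) := ⟨fun s ↦ φ (s * p.1, p.2),
    (hcurve p).continuous.comp continuous_subtype_val⟩
  have hu : ivpResidual fc (p, u) = 0 := by
    refine ivpResidual_eq_zero_iff.mpr ⟨by simp [u, hφ₀], fun s hs ↦ ?_⟩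
    rw [IccExtend_of_mem _ _ hs]
    exact (hcurve p s).hasDerivWithinAt.congr_of_mem (fun r hr ↦ IccExtend_of_mem _ _ hr) hs
  have hres : ContDiffAt ℝ n (ivpResidual fc) (p, u) := (contDiff_ivpResidual hf).contDiffAt
  have hn' : (n : WithTop ℕ∞) ≠ 0 := mod_cast hn
  have hinv := isInvertible_fderiv_ivpResidual (f := fc) hf₁ p u
  let ψ := hres.implicitFunction hn' hinv
  have heq : φ =ᶠ[𝓝 p] fun q ↦ ψ q 1 := by
    filter_upwards [hres.eventually_apply_implicitFunction hn' hinv] with q hq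
    obtain ⟨hψ₀, hψ⟩ := ivpResidual_eq_zero_iff.mp (hq.trans hu)
    have := eqOn_Icc_of_isIntegralCurveOn (hf₁.const_smul q.1).locallyLipschitz
      ((hcurve q).isIntegralCurveOn _) hψ (by simp [hφ₀, hψ₀]) (right_mem_Icc.mpr zero_le_one)
    simpa using this
  have hψ : ContDiffAt ℝ n ψ p := hres.contDiffAt_implicitFunction hn' hinv
  refine ContDiffAt.congr_of_eventuallyEq ?_ heq
  exact (ContinuousMap.evalCLM ℝ (1 : unitInterval)).contDiff.contDiffAt.comp p hψ

end

section
variable {E : Type*} [NormedAddCommGroup E] [NormedSpace ℝ E] {w : ℝ × ℝ → E} {p : ℝ × ℝ}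

theorem hasDerivAt_partialT (hw : DifferentiableAt ℝ w p) :
    HasDerivAt (fun t ↦ w (p.1, t)) (partialT w p) p.2 :=
  hw.hasFDerivAt.comp_hasDerivAt p.2 ((hasDerivAt_const _ _).prodMk (hasDerivAt_id _))

theorem hasDerivAt_partialE (hw : DifferentiableAt ℝ w p) :
    HasDerivAt (fun ε ↦ w (ε, p.2)) (partialE w p) p.1 :=
  hw.hasFDerivAt.comp_hasDerivAt p.1 ((hasDerivAt_id _).prodMk (hasDerivAt_const _ _))

theorem differentiable_partialE (hw : ContDiff ℝ 2 w) : Differentiable ℝ (partialE w) :=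
  ((hw.fderiv_right (m := 1) le_rfl).clm_apply contDiff_const).differentiable one_ne_zero

theorem partialT_partialE_comm (hw : ContDiff ℝ 2 w) (p : ℝ × ℝ) :
    partialT (partialE w) p = partialE (partialT w) p := by
  have hw' : DifferentiableAt ℝ (fderiv ℝ w) p :=
    (hw.fderiv_right (m := 1) le_rfl).differentiable one_ne_zero p
  have hsymm : IsSymmSndFDerivAt ℝ w p :=
    hw.contDiffAt.isSymmSndFDerivAt (by simp only [minSmoothness_of_isRCLikeNormedField]; rfl)
  unfold partialT partialE
  simpa [fderiv_clm_apply hw' (differentiableAt_const _)] using hsymm.eq (0, 1) (1, 0)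

end

section
variable {V W Z : Type*} [NormedAddCommGroup V] [NormedSpace ℝ V] [FiniteDimensional ℝ V]
  [NormedAddCommGroup W] [NormedSpace ℝ W] [FiniteDimensional ℝ W]
  [NormedAddCommGroup Z] [NormedSpace ℝ Z] (B : V →ₗ[ℝ] W →ₗ[ℝ] Z)

theorem contDiff_bilinear_apply {E : Type*} [NormedAddCommGroup E] [NormedSpace ℝ E]
    {n : WithTop ℕ∞} {f : E → V} {g : E → W} (hf : ContDiff ℝ n f) (hg : ContDiff ℝ n g) :
    ContDiff ℝ n fun x ↦ B (f x) (g x) :=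
  (B.toContinuousBilinearMap.contDiff.comp hf).clm_apply hg

theorem hasDerivAt_bilinear_apply {u : ℝ → V} {v : ℝ → W} {u' : V} {v' : W} {t : ℝ}
    (hu : HasDerivAt u u' t) (hv : HasDerivAt v v' t) :
    HasDerivAt (fun t ↦ B (u t) (v t)) (B u' (v t) + B (u t) v') t :=
  (B.toContinuousBilinearMap.hasFDerivAt.comp_hasDerivAt t hu).clm_apply hv

theorem exists_norm_bilinear_apply_le : ∃ C, 0 ≤ C ∧ ∀ u v, ‖B u v‖ ≤ C * ‖u‖ * ‖v‖ :=
  ⟨‖B.toContinuousBilinearMap‖, ContinuousLinearMap.opNorm_nonneg _,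
    B.toContinuousBilinearMap.le_opNorm₂⟩

end

section
variable {G : Type*} [NormedAddCommGroup G] [NormedSpace ℝ G]

/-- The first order system of a variation of geodesics, at `x = (α, γ, β)`: the geodesic equation
for `α`, its linearisation for `γ = ∂α/∂ε`, and `Δ(α, β) = 0` in the form `∂β/∂t = γ - [α, β]`. -/
def variationField (lie D : G →ₗ[ℝ] G →ₗ[ℝ] G) (x : G × G × G) : G × G × G :=
  (-D x.1 x.1, -(D x.2.1 x.1 + D x.1 x.2.1), x.2.1 - lie x.1 x.2.2)

variable [FiniteDimensional ℝ G]

section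
variable (lie D : G →ₗ[ℝ] G →ₗ[ℝ] G)

theorem contDiff_variationField {n : WithTop ℕ∞} : ContDiff ℝ n (variationField lie D) :=
  (contDiff_bilinear_apply D (by fun_prop) (by fun_prop)).neg.prodMk <|
    ((contDiff_bilinear_apply D (by fun_prop) (by fun_prop)).add
      (contDiff_bilinear_apply D (by fun_prop) (by fun_prop))).neg.prodMk <|
    ContDiff.sub (by fun_prop) (contDiff_bilinear_apply lie (by fun_prop) (by fun_prop))

theorem exists_norm_variationField_le (r : ℝ) :
    ∃ C : ℝ≥0, ∀ x : G × G × G, ‖x.1‖ ≤ r → ‖variationField lie D x‖ ≤ C * ‖x‖ := by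
  obtain ⟨L, hL₀, hL⟩ := exists_norm_bilinear_apply_le lie
  obtain ⟨M, hM₀, hM⟩ := exists_norm_bilinear_apply_le D
  refine ⟨(2 * M * |r| + 1 + L * |r|).toNNReal, fun x hx ↦ ?_⟩
  rw [Real.coe_toNNReal _ (by positivity)]
  have hα : ‖x.1‖ ≤ |r| := hx.trans (le_abs_self r)
  have hγ : ‖x.2.1‖ ≤ ‖x‖ := (norm_fst_le _).trans (norm_snd_le x)
  have hlie : ‖lie x.1 x.2.2‖ ≤ L * |r| * ‖x‖ :=
    (hL _ _).trans (by gcongr; exact (norm_snd_le _).trans (norm_snd_le x))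
  have hD {v : G} (hv : ‖v‖ ≤ ‖x‖) : ‖D x.1 v‖ ≤ M * |r| * ‖x‖ := (hM _ _).trans (by gcongr)
  have hD' : ‖D x.2.1 x.1‖ ≤ M * |r| * ‖x‖ :=
    (hM _ _).trans (by rw [mul_right_comm]; gcongr)
  have hMr : 0 ≤ M * |r| * ‖x‖ := by positivity
  have hLr : 0 ≤ L * |r| * ‖x‖ := by positivity
  have hx₀ := norm_nonneg x
  refine norm_prod_le_iff.mpr ⟨?_, norm_prod_le_iff.mpr ⟨?_, ?_⟩⟩
  · rw [variationField, norm_neg]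
    linarith [hD (norm_fst_le x)]
  · rw [variationField, norm_neg]
    linarith [norm_add_le (D x.2.1 x.1) (D x.1 x.2.1), hD hγ]
  · rw [variationField]
    linarith [norm_sub_le x.2.1 (lie x.1 x.2.2)]

end

theorem hasDerivAt_partialE_of_geodesic {D : G →ₗ[ℝ] G →ₗ[ℝ] G} {a : ℝ × ℝ → G}
    (ha : ContDiff ℝ 2 a) (hgeo : ∀ p, partialT a p = -D (a p) (a p)) (p : ℝ × ℝ) :
    HasDerivAt (fun t ↦ partialE a (p.1, t)) (-(D (partialE a p) (a p) + D (a p) (partialE a p)))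
      p.2 := by
  have ha₁ : Differentiable ℝ a := ha.differentiable two_ne_zero
  have hE : HasDerivAt (fun ε ↦ partialT a (ε, p.2))
      (-(D (partialE a p) (a p) + D (a p) (partialE a p))) p.1 := by
    simp only [hgeo]
    have hEa := hasDerivAt_partialE (ha₁ p)
    exact (hasDerivAt_bilinear_apply D hEa hEa).neg
  have hdiff : DifferentiableAt ℝ (partialT a) p := by
    rw [funext hgeo]
    exact ((contDiff_bilinear_apply D ha ha).differentiable two_ne_zero p).neg
  rw [hE.unique (hasDerivAt_partialE hdiff), ← partialT_partialE_comm ha]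
  exact hasDerivAt_partialT (differentiable_partialE ha p)

theorem partialE_eq_of_isIntegralCurve_variationField {lie D : G →ₗ[ℝ] G →ₗ[ℝ] G}
    {w : ℝ × ℝ → G × G × G} (hw : ContDiff ℝ 2 w)
    (hcurve : ∀ ε, IsIntegralCurve (fun t ↦ w (ε, t)) fun _ ↦ variationField lie D)
    (hinit : ∀ ε, partialE (fun q ↦ (w q).1) (ε, 0) = (w (ε, 0)).2.1) {p : ℝ × ℝ}
    (hp : p.2 ∈ Icc (0 : ℝ) 1) : partialE (fun q ↦ (w q).1) p = (w p).2.1 := by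
  have ha : ContDiff ℝ 2 fun q ↦ (w q).1 := hw.fst
  have hgeo (q : ℝ × ℝ) : partialT (fun q ↦ (w q).1) q = -D (w q).1 (w q).1 :=
    (hasDerivAt_partialT (ha.differentiable two_ne_zero q)).unique (hcurve q.1 q.2).fst
  let X : G × G → G × G := fun x ↦ (-D x.1 x.1, -(D x.2 x.1 + D x.1 x.2))
  have hX : ContDiff ℝ 1 X :=
    (contDiff_bilinear_apply D (by fun_prop) (by fun_prop)).neg.prodMk
      ((contDiff_bilinear_apply D (by fun_prop) (by fun_prop)).add
        (contDiff_bilinear_apply D (by fun_prop) (by fun_prop))).neg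
  have hpartialE : IsIntegralCurve (fun t ↦ ((w (p.1, t)).1, partialE (fun q ↦ (w q).1) (p.1, t)))
      fun _ ↦ X := fun t ↦
    (hcurve p.1 t).fst.prodMk (hasDerivAt_partialE_of_geodesic ha hgeo (p.1, t))
  have hγ : IsIntegralCurve (fun t ↦ ((w (p.1, t)).1, (w (p.1, t)).2.1)) fun _ ↦ X := fun t ↦
    (hcurve p.1 t).fst.prodMk (hcurve p.1 t).snd.fst
  exact congr_arg Prod.snd (eqOn_Icc_of_isIntegralCurveOn hX.locallyLipschitz
    (hpartialE.isIntegralCurveOn _) (hγ.isIntegralCurveOn _) (Prod.ext rfl (hinit p.1)) hp)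

end

section
variable {G : Type*} [NormedAddCommGroup G] [InnerProductSpace ℝ G]
  {lie D : G →ₗ[ℝ] G →ₗ[ℝ] G}

theorem torsionFree_of_koszul (hanti : ∀ u, lie u u = 0)
    (hkoszul : ∀ u v w, 2 * ⟪D u v, w⟫_ℝ = ⟪lie u v, w⟫_ℝ + ⟪lie w u, v⟫_ℝ + ⟪lie w v, u⟫_ℝ)
    (u v : G) : lie u v = D u v - D v u := by
  have hswap : lie v u = -lie u v := (LinearMap.IsAlt.neg hanti u v).symm
  refine ext_inner_right ℝ fun w ↦ ?_
  rw [inner_sub_left]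
  have huv := hkoszul u v w
  have hvu := hkoszul v u w
  rw [hswap, inner_neg_left] at hvu
  linarith

theorem inner_apply_self_eq_zero_of_koszul (hanti : ∀ u, lie u u = 0)
    (hkoszul : ∀ u v w, 2 * ⟪D u v, w⟫_ℝ = ⟪lie u v, w⟫_ℝ + ⟪lie w u, v⟫_ℝ + ⟪lie w v, u⟫_ℝ)
    (u : G) : ⟪u, D u u⟫_ℝ = 0 := by
  rw [real_inner_comm]
  simpa [hanti] using hkoszul u u u

variable [FiniteDimensional ℝ G]

theorem exists_contDiff_flow_variationField (hD : ∀ u, ⟪u, D u u⟫_ℝ = 0) :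
    ∃ φ : ℝ × G × G × G → G × G × G, ContDiff ℝ (⊤ : ℕ∞) φ ∧ (∀ x, φ (0, x) = x) ∧
      ∀ x, IsIntegralCurve (fun t ↦ φ (t, x)) fun _ ↦ variationField lie D := by
  have : CompleteSpace G := FiniteDimensional.complete ℝ G
  choose φ hφ₀ hφ using exists_isIntegralCurve_of_inner_eq_zero (.fst ℝ G (G × G))
    (contDiff_variationField lie D) (exists_norm_variationField_le lie D)
    (fun x ↦ by simp [variationField, hD])
  exact ⟨fun p ↦ φ p.2 p.1,
    contDiff_of_forall_isIntegralCurve ENat.top_ne_zero (contDiff_variationField lie D) hφ₀ hφ,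
    hφ₀, hφ⟩

theorem exists_variation (lie : G →ₗ[ℝ] G →ₗ[ℝ] G) (hD : ∀ u, ⟪u, D u u⟫_ℝ = 0) (a g b : G) :
    ∃ w : ℝ × ℝ → G × G × G, ContDiff ℝ (⊤ : ℕ∞) w ∧ (∀ ε, w (ε, 0) = (a + ε • g, g, b)) ∧
      ∀ ε, IsIntegralCurve (fun t ↦ w (ε, t)) fun _ ↦ variationField lie D := by
  obtain ⟨φ, hφ, hφ₀, hcurve⟩ := exists_contDiff_flow_variationField (lie := lie) hD
  exact ⟨fun p ↦ φ (p.2, a + p.1 • g, g, b), by fun_prop, fun ε ↦ hφ₀ _,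
    fun ε ↦ hcurve (a + ε • g, g, b)⟩

theorem hasDerivAt_of_covDeriv_covDeriv_eq_curv (htorsion : ∀ u v, lie u v = D u v - D v u)
    {α β : ℝ → G} {t : ℝ} (hα : HasDerivAt α (-D (α t) (α t)) t)
    (hβ : ContDiff ℝ 2 β)
    (hjacobi : covDeriv D α (covDeriv D α β) t = curv lie D (α t) (β t) (α t)) :
    HasDerivAt (fun s ↦ deriv β s + lie (α s) (β s))
      (-(D (deriv β t + lie (α t) (β t)) (α t) + D (α t) (deriv β t + lie (α t) (β t)))) t := by
  have hβ₁ : HasDerivAt β (deriv β t) t := (hβ.differentiable two_ne_zero t).hasDerivAt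
  have hβ₂ : HasDerivAt (deriv β) (deriv (deriv β) t) t :=
    (hβ.differentiable_deriv_two t).hasDerivAt
  have hcov : deriv (covDeriv D α β) t =
      deriv (deriv β) t + (D (-D (α t) (α t)) (β t) + D (α t) (deriv β t)) :=
    (hβ₂.add (hasDerivAt_bilinear_apply D hα hβ₁)).deriv
  have hβ'' : deriv (deriv β) t = curv lie D (α t) (β t) (α t) - D (α t) (covDeriv D α β t)
      - (D (-D (α t) (α t)) (β t) + D (α t) (deriv β t)) := by
    rw [← hjacobi, covDeriv, hcov]
    abel
  convert! hβ₂.add (hasDerivAt_bilinear_apply lie hα hβ₁) using 1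
  rw [hβ'']
  simp only [covDeriv, curv, htorsion, map_add, map_sub, map_neg, LinearMap.add_apply,
    LinearMap.sub_apply, LinearMap.neg_apply]
  abel

theorem isIntegralCurveOn_variationField_of_jacobi (htorsion : ∀ u v, lie u v = D u v - D v u)
    {α β : ℝ → G} {s : Set ℝ} (hβ : ContDiff ℝ 2 β)
    (hgeo : ∀ t ∈ s, HasDerivAt α (-D (α t) (α t)) t)
    (hjacobi : ∀ t ∈ s, covDeriv D α (covDeriv D α β) t = curv lie D (α t) (β t) (α t)) :
    IsIntegralCurveOn (fun t ↦ (α t, deriv β t + lie (α t) (β t), β t))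
      (fun _ ↦ variationField lie D) s := fun t ht ↦ by
  have hβ' : HasDerivAt β (deriv β t + lie (α t) (β t) - lie (α t) (β t)) t := by
    simpa using (hβ.differentiable two_ne_zero t).hasDerivAt
  exact ((hgeo t ht).prodMk ((hasDerivAt_of_covDeriv_covDeriv_eq_curv htorsion (hgeo t ht) hβ
    (hjacobi t ht)).prodMk hβ')).hasDerivWithinAt

theorem jacobi_field_comes_from_variation_of_geodesics_general
    (htorsion : ∀ u v, lie u v = D u v - D v u) (hD : ∀ u, ⟪u, D u u⟫_ℝ = 0)
    {α₀ β₀ : ℝ → G} (hβ₀ : ContDiff ℝ 2 β₀)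
    (hgeo : ∀ t ∈ Icc (0 : ℝ) 1, HasDerivAt α₀ (-D (α₀ t) (α₀ t)) t)
    (hjacobi : ∀ t ∈ Icc (0 : ℝ) 1,
      covDeriv D α₀ (covDeriv D α₀ β₀) t = curv lie D (α₀ t) (β₀ t) (α₀ t)) :
    ∃ α β : ℝ × ℝ → G, ContDiff ℝ (⊤ : ℕ∞) α ∧ ContDiff ℝ (⊤ : ℕ∞) β ∧
      (∀ t ∈ Icc (0 : ℝ) 1, α (0, t) = α₀ t ∧ β (0, t) = β₀ t) ∧
      ∀ p : ℝ × ℝ, p.2 ∈ Icc (0 : ℝ) 1 →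
        partialT α p = -D (α p) (α p) ∧
        partialT β p - partialE α p + lie (α p) (β p) = 0 := by
  let γ₀ : G := deriv β₀ 0 + lie (α₀ 0) (β₀ 0)
  obtain ⟨w, hw, hw₀, hcurve⟩ := exists_variation lie hD (α₀ 0) γ₀ (β₀ 0)
  have hdiff : Differentiable ℝ w := hw.differentiable (by simp)
  have hinit (ε : ℝ) : partialE (fun p ↦ (w p).1) (ε, 0) = (w (ε, 0)).2.1 := by
    refine (hasDerivAt_partialE (hdiff.fst (ε, 0))).unique ?_
    simpa [hw₀] using ((hasDerivAt_id ε).smul_const γ₀).const_add (α₀ 0)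
  have hw_zero : EqOn (fun t ↦ w (0, t)) (fun t ↦ (α₀ t, deriv β₀ t + lie (α₀ t) (β₀ t), β₀ t))
      (Icc 0 1) :=
    eqOn_Icc_of_isIntegralCurveOn (contDiff_variationField lie D).locallyLipschitz
      ((hcurve 0).isIntegralCurveOn _)
      (isIntegralCurveOn_variationField_of_jacobi htorsion hβ₀ hgeo hjacobi) (by simp [hw₀, γ₀])
  refine ⟨fun p ↦ (w p).1, fun p ↦ (w p).2.2, hw.fst, hw.snd.snd, fun t ht ↦
    ⟨congr_arg Prod.fst (hw_zero ht), congr_arg (fun x ↦ x.2.2) (hw_zero ht)⟩, fun p hp ↦ ?_⟩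
  rw [partialE_eq_of_isIntegralCurve_variationField (contDiff_infty.mp hw 2) hcurve hinit hp,
    (hasDerivAt_partialT (hdiff.fst p)).unique (hcurve p.1 p.2).fst,
    (hasDerivAt_partialT (hdiff.snd.snd p)).unique (hcurve p.1 p.2).snd.snd]
  simp [variationField]

end

/-- Let `α₀ : [0,1] → 𝔤` be a geodesic and `β₀` a Jacobi field along
`α₀`.  Then there exist smooth maps `α β : ℝ × [0,1] → 𝔤` such that `α(0,·) = α₀`,
`β(0,·) = β₀`, for every `ε` the curve `t ↦ α(ε,t)` is a geodesic, and `Δ(α,β) = 0`: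
every Jacobi field arises as the transverse variation of a variation through geodesics. -/
theorem jacobi_field_comes_from_variation_of_geodesics
    {G : Type*} [NormedAddCommGroup G] [InnerProductSpace ℝ G] [FiniteDimensional ℝ G]
    (lie : G →ₗ[ℝ] G →ₗ[ℝ] G)
    (hanti : ∀ u : G, lie u u = 0)
    (hjac : ∀ u v w : G, lie u (lie v w) = lie (lie u v) w + lie v (lie u w))
    (D : G →ₗ[ℝ] G →ₗ[ℝ] G)
    (hD : ∀ u v w : G,
      2 * ⟪D u v, w⟫_ℝ = ⟪lie u v, w⟫_ℝ + ⟪lie w u, v⟫_ℝ + ⟪lie w v, u⟫_ℝ)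
    (α₀ β₀ : ℝ → G) (hα₀ : ContDiff ℝ (⊤ : ℕ∞) α₀) (hβ₀ : ContDiff ℝ (⊤ : ℕ∞) β₀)
    (hgeo : ∀ t ∈ Set.Icc (0 : ℝ) 1, deriv α₀ t = -(D (α₀ t) (α₀ t)))
    (hjacobi : ∀ t ∈ Set.Icc (0 : ℝ) 1,
      covDeriv D α₀ (covDeriv D α₀ β₀) t = curv lie D (α₀ t) (β₀ t) (α₀ t)) :
    ∃ α β : ℝ × ℝ → G, ContDiff ℝ (⊤ : ℕ∞) α ∧ ContDiff ℝ (⊤ : ℕ∞) β ∧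
      (∀ t ∈ Set.Icc (0 : ℝ) 1, α (0, t) = α₀ t ∧ β (0, t) = β₀ t) ∧
      (∀ p : ℝ × ℝ, p.2 ∈ Set.Icc (0 : ℝ) 1 →
        partialT α p = -(D (α p) (α p)) ∧
        partialT β p - partialE α p + lie (α p) (β p) = 0) :=
  jacobi_field_comes_from_variation_of_geodesics_general (torsionFree_of_koszul hanti hD)
    (inner_apply_self_eq_zero_of_koszul hanti hD) (contDiff_infty.mp hβ₀ 2)
    (fun t ht ↦ hgeo t ht ▸ (hα₀.differentiable (by simp) t).hasDerivAt) hjacobi
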